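/- Let (Ω, ℱ, P) be a probability space with a filtration (ℱ_l)_{l∈ℕ}, and let (Z_l)_{l∈ℕ} be a sequence of nonnegative integrable real random variables adapted to the filtration. Let δ, ε ∈ (0,1), ζ, M ≥ 0, and K ≥ 0, and suppose the shifted drift condition holds: for every l ≥ 1, E[Z_l ∣ ℱ_{l−1}] ≤ (1−δ)(1−ε)·Z_{l−1} + (1−δ)·(ζ + 2K) + δ·M almost surely. Then the sequence E[min_{k≤l} Z_k] is nonincreasing in l and its limit as l → ∞ is at most (1/ε)·(ζ + 2K + δM/(1−δ)). -/

import Mathlib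

open MeasureTheory Filter

/-- Running minimum `min_{k ≤ l} Z k ω`. -/
noncomputable def runMin {Ω : Type*} (Z : ℕ → Ω → ℝ) (l : ℕ) (ω : Ω) : ℝ :=
  (Finset.range (l + 1)).inf' (Finset.nonempty_range_iff.mpr (Nat.succ_ne_zero l))
    (fun k => Z k ω)

/-!
Only the expectations `E[Z l]` matter: integrating the drift condition gives an affine recursion
`E[Z (l + 1)] ≤ a * E[Z l] + c` with `0 ≤ a < 1`, which pushes `E[Z l]` below its fixed point
`c / (1 - a)` up to a geometrically small error. The expected running minimum lies below `E[Z l]`,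
and being antitone and bounded below it converges, so its limit is at most `c / (1 - a)`. For the
shifted drift `a = (1 - δ) * (1 - ε)`, so that `1 - a ≥ (1 - δ) * ε`, which gives the stated radius.
-/

section RunMin

variable {Ω : Type*} {Z : ℕ → Ω → ℝ}

lemma runMin_le {k l : ℕ} (hkl : k ≤ l) (ω : Ω) : runMin Z l ω ≤ Z k ω :=
  Finset.inf'_le _ (Finset.mem_range_succ_iff.mpr hkl)

lemma le_runMin {l : ℕ} {ω : Ω} {x : ℝ} (h : ∀ k ≤ l, x ≤ Z k ω) : x ≤ runMin Z l ω :=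
  Finset.le_inf' _ _ fun k hk ↦ h k (Finset.mem_range_succ_iff.mp hk)

lemma antitone_runMin (Z : ℕ → Ω → ℝ) : Antitone (runMin Z) :=
  fun _ _ hlm ω ↦ le_runMin fun _ hk ↦ runMin_le (hk.trans hlm) ω

lemma runMin_zero (Z : ℕ → Ω → ℝ) : runMin Z 0 = Z 0 := by
  ext ω
  simp [runMin]

lemma runMin_succ (Z : ℕ → Ω → ℝ) (l : ℕ) : runMin Z (l + 1) = Z (l + 1) ⊓ runMin Z l := by
  ext ω
  simp only [runMin, Finset.range_add_one (n := l + 1)]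
  exact Finset.inf'_insert Finset.nonempty_range_add_one fun k ↦ Z k ω

variable {m0 : MeasurableSpace Ω} {μ : Measure Ω}

lemma integrable_runMin (hZ : ∀ l, Integrable (Z l) μ) (l : ℕ) : Integrable (runMin Z l) μ := by
  induction l with
  | zero => exact runMin_zero Z ▸ hZ 0
  | succ l ih => exact runMin_succ Z l ▸ (hZ (l + 1)).inf ih

lemma antitone_integral_runMin (hZ : ∀ l, Integrable (Z l) μ) :
    Antitone fun l ↦ ∫ ω, runMin Z l ω ∂μ :=
  fun l m hlm ↦ integral_mono (integrable_runMin hZ m) (integrable_runMin hZ l)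
    (antitone_runMin Z hlm)

lemma integral_runMin_le (hZ : ∀ l, Integrable (Z l) μ) (l : ℕ) :
    ∫ ω, runMin Z l ω ∂μ ≤ ∫ ω, Z l ω ∂μ :=
  integral_mono (integrable_runMin hZ l) (hZ l) (runMin_le le_rfl)

lemma integral_le_integral_runMin {g : Ω → ℝ} (hZ : ∀ l, Integrable (Z l) μ)
    (hg : Integrable g μ) (hgZ : ∀ l, g ≤ᵐ[μ] Z l) (l : ℕ) :
    ∫ ω, g ω ∂μ ≤ ∫ ω, runMin Z l ω ∂μ := by
  refine integral_mono_ae hg (integrable_runMin hZ l) ?_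
  filter_upwards [ae_all_iff.mpr hgZ] with ω hω using le_runMin fun k _ ↦ hω k

end RunMin

lemma integral_le_integral_of_condExp_le {Ω : Type*} {m m0 : MeasurableSpace Ω} {μ : Measure Ω}
    {f g : Ω → ℝ} (hm : m ≤ m0) [SigmaFinite (μ.trim hm)] (hg : Integrable g μ)
    (hfg : μ[f | m] ≤ᵐ[μ] g) : ∫ ω, f ω ∂μ ≤ ∫ ω, g ω ∂μ :=
  calc ∫ ω, f ω ∂μ = ∫ ω, (μ[f | m]) ω ∂μ := (integral_condExp hm).symm
    _ ≤ ∫ ω, g ω ∂μ := integral_mono_ae integrable_condExp hg hfg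

lemma le_div_one_sub_add_pow_mul_of_le_mul_add {u : ℕ → ℝ} {a c : ℝ} (ha₀ : 0 ≤ a) (ha₁ : a ≠ 1)
    (hu : ∀ n, u (n + 1) ≤ a * u n + c) (n : ℕ) :
    u n ≤ c / (1 - a) + a ^ n * (u 0 - c / (1 - a)) := by
  have fixedPoint : a * (c / (1 - a)) + c = c / (1 - a) := by
    have : 1 - a ≠ 0 := sub_ne_zero.mpr ha₁.symm
    field_simp
    ring
  have excess_le : u n - c / (1 - a) ≤ a ^ n * (u 0 - c / (1 - a)) :=
    le_geom (u := fun k ↦ u k - c / (1 - a)) ha₀ n fun k _ ↦ by linarith [hu k]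
  linarith

lemma le_div_one_sub_of_tendsto_of_le_mul_add {u v : ℕ → ℝ} {a c A : ℝ} (ha₀ : 0 ≤ a)
    (ha₁ : a < 1) (hu : ∀ n, u (n + 1) ≤ a * u n + c) (hvu : ∀ n, v n ≤ u n)
    (hv : Tendsto v atTop (nhds A)) : A ≤ c / (1 - a) := by
  have tendsto_bound : Tendsto (fun n : ℕ ↦ c / (1 - a) + a ^ n * (u 0 - c / (1 - a))) atTop
      (nhds (c / (1 - a))) := by
    simpa using ((tendsto_pow_atTop_nhds_zero_of_lt_one ha₀ ha₁).mul_const _).const_add _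
  exact le_of_tendsto_of_tendsto' hv tendsto_bound fun n ↦
    (hvu n).trans (le_div_one_sub_add_pow_mul_of_le_mul_add ha₀ ha₁.ne hu n)

lemma one_sub_mul_one_sub_mem_Ico {δ ε : ℝ} (hδ : δ ∈ Set.Icc (0 : ℝ) 1)
    (hε : ε ∈ Set.Ioc (0 : ℝ) 1) : (1 - δ) * (1 - ε) ∈ Set.Ico (0 : ℝ) 1 := by
  obtain ⟨hδ₀, hδ₁⟩ := hδ
  obtain ⟨hε₀, hε₁⟩ := hε
  exact ⟨mul_nonneg (by linarith) (by linarith),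
    mul_lt_one_of_nonneg_of_lt_one_right (by linarith) (by linarith) (by linarith)⟩

lemma ood_drift_fixedPoint_le {δ ε s M : ℝ} (hδ : δ ∈ Set.Ico (0 : ℝ) 1) (hε : 0 < ε)
    (hs : 0 ≤ s) (hM : 0 ≤ M) :
    ((1 - δ) * s + δ * M) / (1 - (1 - δ) * (1 - ε)) ≤ (1 / ε) * (s + δ * M / (1 - δ)) := by
  obtain ⟨hδ₀, hδ₁⟩ := hδ
  have : 0 < 1 - δ := sub_pos.mpr hδ₁
  calc ((1 - δ) * s + δ * M) / (1 - (1 - δ) * (1 - ε))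
      ≤ ((1 - δ) * s + δ * M) / ((1 - δ) * ε) := by
        gcongr
        linarith
    _ = (1 / ε) * (s + δ * M / (1 - δ)) := by field_simp

theorem expected_running_min_tendsto_le_ood_general
    {Ω : Type*} {m0 : MeasurableSpace Ω} {μ : Measure Ω} {m : ℕ → MeasurableSpace Ω}
    (hm : ∀ l, m l ≤ m0) [∀ l, SigmaFinite (μ.trim (hm l))]
    {Z : ℕ → Ω → ℝ} {g b : Ω → ℝ} {a : ℝ} (hZ : ∀ l, Integrable (Z l) μ)
    (hg : Integrable g μ) (hgZ : ∀ l, g ≤ᵐ[μ] Z l) (hb : Integrable b μ)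
    (ha : a ∈ Set.Ico (0 : ℝ) 1)
    (hdrift : ∀ l, μ[Z (l + 1) | m l] ≤ᵐ[μ] fun ω ↦ a * Z l ω + b ω) :
    Antitone (fun l ↦ ∫ ω, runMin Z l ω ∂μ) ∧
      ∃ A : ℝ, Tendsto (fun l ↦ ∫ ω, runMin Z l ω ∂μ) atTop (nhds A) ∧
        A ≤ (∫ ω, b ω ∂μ) / (1 - a) := by
  have antitone_min := antitone_integral_runMin hZ
  have bddBelow_min : BddBelow (Set.range fun l ↦ ∫ ω, runMin Z l ω ∂μ) :=
    ⟨∫ ω, g ω ∂μ, Set.forall_mem_range.mpr (integral_le_integral_runMin hZ hg hgZ)⟩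
  have tendsto_min := tendsto_atTop_ciInf antitone_min bddBelow_min
  have recursion (l : ℕ) : ∫ ω, Z (l + 1) ω ∂μ ≤ a * ∫ ω, Z l ω ∂μ + ∫ ω, b ω ∂μ := by
    rw [← integral_const_mul, ← integral_add ((hZ l).const_mul a) hb]
    exact integral_le_integral_of_condExp_le (hm l) (((hZ l).const_mul a).add hb) (hdrift l)
  exact ⟨antitone_min, _, tendsto_min, le_div_one_sub_of_tendsto_of_le_mul_add ha.1 ha.2
    recursion (integral_runMin_le hZ) tendsto_min⟩

/-- Convergence under distribution shift: if the shifted drift condition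
`E[Z_l ∣ ℱ_{l−1}] ≤ (1−δ)(1−ε) Z_{l−1} + (1−δ)(ζ + 2K) + δM` holds a.s., then
`l ↦ E[min_{k≤l} Z_k]` is nonincreasing and its limit is at most
`(1/ε)(ζ + 2K + δM/(1−δ))`. -/
theorem expected_running_min_tendsto_le_ood
    {Ω : Type*} {m0 : MeasurableSpace Ω} {μ : Measure Ω} [IsProbabilityMeasure μ]
    (ℱ : Filtration ℕ m0) (Z : ℕ → Ω → ℝ)
    (hadapted : Adapted ℱ Z)
    (hint : ∀ l, Integrable (Z l) μ)
    (hnonneg : ∀ l ω, 0 ≤ Z l ω)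
    (δ ε ζ M K : ℝ) (hδ : δ ∈ Set.Ioo (0 : ℝ) 1) (hε : ε ∈ Set.Ioo (0 : ℝ) 1)
    (hζ : 0 ≤ ζ) (hM : 0 ≤ M) (hK : 0 ≤ K)
    (hdrift : ∀ l : ℕ, 1 ≤ l →
      μ[Z l | ℱ (l - 1)] ≤ᵐ[μ]
        fun ω => (1 - δ) * (1 - ε) * Z (l - 1) ω + (1 - δ) * (ζ + 2 * K) + δ * M) :
    Antitone (fun l => ∫ ω, runMin Z l ω ∂μ) ∧
      ∃ A : ℝ, Tendsto (fun l => ∫ ω, runMin Z l ω ∂μ) atTop (nhds A) ∧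
        A ≤ (1 / ε) * (ζ + 2 * K + δ * M / (1 - δ)) := by
  obtain ⟨antitone_min, A, tendsto_min, hA⟩ := expected_running_min_tendsto_le_ood_general
    (b := fun _ ↦ (1 - δ) * (ζ + 2 * K) + δ * M) ℱ.le hint (integrable_zero Ω ℝ μ)
    (fun l ↦ .of_forall (hnonneg l)) (integrable_const _)
    (one_sub_mul_one_sub_mem_Ico (Set.Ioo_subset_Icc_self hδ) (Set.Ioo_subset_Ioc_self hε))
    fun l ↦ by simpa only [Nat.add_sub_cancel, add_assoc] using hdrift (l + 1) l.succ_pos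
  rw [integral_const, probReal_univ, one_smul] at hA
  exact ⟨antitone_min, A, tendsto_min, hA.trans
    (ood_drift_fixedPoint_le (Set.Ioo_subset_Ico_self hδ) hε.1 (by positivity) hM)⟩
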